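/- Let n \ge 2 and a \ge 1 be integers. There exists an integer N (depending on n and a) such that for every odd integer q > N the following holds. If a is even, writing g(y) := y^{2n+1} \cdot (1 + y^2 + y^4 + ... + y^{2a-2})^n \cdot (1 + y^2 + y^4 + ... + y^{a-2}) = \sum_k g_k y^k, then a^{n+1} \cdot N_{BC}(n,q,0,a) = 2 \sum_k g_k (q-k)^n. If a is odd, writing g(y) := y^{2n+1} \cdot (1 + y^2 + y^4 + ... + y^{2a-2})^n \cdot (1 + y + y^2 + ... + y^{a-1}) = \sum_k g_k y^k, then a^{n+1} \cdot N_{BC}(n,q,0,a) = \sum_k g_k (q-k)^n. -/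

import Mathlib

open Polynomial

/-- `x` avoids the integer interval `[u, v]` in `ZMod q`. -/
def Avoids {q : ℕ} (x : ZMod q) (u v : ℤ) : Prop :=
  ∀ k : ℤ, u ≤ k → k ≤ v → x ≠ (k : ZMod q)

/-- Count for the type `B` deformation: `x_i`, `x_i - x_j` and `x_i + x_j`
all avoid `[u, v]`. -/
noncomputable def N_B (n q : ℕ) (u v : ℤ) : ℕ :=
  Set.ncard {x : Fin n → ZMod q |
    (∀ i, Avoids (x i) u v) ∧
    ∀ i j : Fin n, i < j → Avoids (x i - x j) u v ∧ Avoids (x i + x j) u v}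

/-- Count for the type `C` deformation: `2x_i`, `x_i - x_j` and `x_i + x_j`
all avoid `[u, v]`. -/
noncomputable def N_C (n q : ℕ) (u v : ℤ) : ℕ :=
  Set.ncard {x : Fin n → ZMod q |
    (∀ i, Avoids (2 * x i) u v) ∧
    ∀ i j : Fin n, i < j → Avoids (x i - x j) u v ∧ Avoids (x i + x j) u v}

/-- Count for the type `BC` deformation: `x_i`, `2x_i`, `x_i - x_j` and `x_i + x_j`
all avoid `[u, v]`. -/
noncomputable def N_BC (n q : ℕ) (u v : ℤ) : ℕ :=
  Set.ncard {x : Fin n → ZMod q |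
    (∀ i, Avoids (x i) u v ∧ Avoids (2 * x i) u v) ∧
    ∀ i j : Fin n, i < j → Avoids (x i - x j) u v ∧ Avoids (x i + x j) u v}

/-- Count for the type `D` deformation: `x_i - x_j` and `x_i + x_j`
avoid `[u, v]`. -/
noncomputable def N_D (n q : ℕ) (u v : ℤ) : ℕ :=
  Set.ncard {x : Fin n → ZMod q |
    ∀ i j : Fin n, i < j → Avoids (x i - x j) u v ∧ Avoids (x i + x j) u v}

/-- `1 + y + y^2 + ... + y^(m-1)`. -/
noncomputable def phi (m : ℕ) : ℚ[X] := ∑ i ∈ Finset.range m, X ^ i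

/-- `1 + y^2 + y^4 + ... + y^(2(m-1))`. -/
noncomputable def phi2 (m : ℕ) : ℚ[X] := ∑ i ∈ Finset.range m, X ^ (2 * i)

/-- For `g = ∑_k g_k y^k`, the sum `∑_k g_k (q - k)^n`. -/
noncomputable def polysum (g : ℚ[X]) (q n : ℕ) : ℚ :=
  ∑ k ∈ Finset.range (g.natDegree + 1), g.coeff k * ((q : ℚ) - (k : ℚ)) ^ n
section Bij
open Finset

variable {n : ℕ}

/-- supremum of `f` over the strict predecessors of `i` w.r.t. the key `κ`. -/
def prv (κ f : Fin n → ℕ) (i : Fin n) : ℕ := (univ.filter (fun j => κ j < κ i)).sup f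

/-- sum of `e` over the weak predecessors of `i`. -/
def cum (κ e : Fin n → ℕ) (i : Fin n) : ℕ := ∑ j ∈ univ.filter (fun j => κ j ≤ κ i), e j

theorem pred_cases (κ : Fin n → ℕ) (i : Fin n) :
    (∀ j, ¬ κ j < κ i) ∨ ∃ j0, κ j0 < κ i ∧ ∀ j, κ j < κ i → κ j ≤ κ j0 := by
  by_cases h : (univ.filter (fun j => κ j < κ i)).Nonempty
  · right
    obtain ⟨j0, hj0, hm⟩ := Finset.exists_max_image _ κ h
    refine ⟨j0, by simpa using hj0, fun j hj => hm j (by simpa using hj)⟩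
  · left
    intro j hj
    exact h ⟨j, by simpa using hj⟩

theorem prv_zero {κ f : Fin n → ℕ} {i : Fin n} (h : ∀ j, ¬ κ j < κ i) : prv κ f i = 0 := by
  unfold prv
  rw [Finset.filter_false_of_mem (fun j _ => h j)]
  rfl

theorem prv_eq {κ f : Fin n → ℕ} {i j0 : Fin n} (hf : ∀ i j, κ i ≤ κ j → f i ≤ f j)
    (h0 : κ j0 < κ i) (h : ∀ j, κ j < κ i → κ j ≤ κ j0) : prv κ f i = f j0 := by
  unfold prv
  apply le_antisymm
  · apply Finset.sup_le
    intro j hj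
    exact hf _ _ (h j (by simpa using hj))
  · exact Finset.le_sup (f := f) (by simpa using h0)

theorem cum_zero {κ e : Fin n → ℕ} (hk : Function.Injective κ) {i : Fin n}
    (h : ∀ j, ¬ κ j < κ i) : cum κ e i = e i := by
  unfold cum
  have : univ.filter (fun j => κ j ≤ κ i) = {i} := by
    ext j
    simp only [mem_filter, mem_univ, true_and, mem_singleton]
    constructor
    · intro hj
      exact hk (le_antisymm hj (not_lt.mp (h j)))
    · rintro rfl; exact le_rfl
  rw [this, sum_singleton]

theorem cum_succ {κ e : Fin n → ℕ} (hk : Function.Injective κ) {i j0 : Fin n}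
    (h0 : κ j0 < κ i) (h : ∀ j, κ j < κ i → κ j ≤ κ j0) : cum κ e i = cum κ e j0 + e i := by
  unfold cum
  have : univ.filter (fun j => κ j ≤ κ i) = insert i (univ.filter (fun j => κ j ≤ κ j0)) := by
    ext j
    simp only [mem_filter, mem_univ, true_and, mem_insert]
    constructor
    · intro hj
      rcases hj.lt_or_eq with h1 | h1
      · exact Or.inr (h j h1)
      · exact Or.inl (hk h1)
    · rintro (rfl | h1)
      · exact le_rfl
      · omega
  rw [this, sum_insert (by simpa using h0), add_comm]

theorem cum_mono {κ e : Fin n → ℕ} {i j : Fin n} (h : κ i ≤ κ j) : cum κ e i ≤ cum κ e j := by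
  unfold cum
  apply Finset.sum_le_sum_of_subset
  intro l hl
  simp only [mem_filter, mem_univ, true_and] at hl ⊢
  omega

theorem cum_lt {κ e : Fin n → ℕ} {i j : Fin n} (h : κ i < κ j) (he : 0 < e j) :
    cum κ e i < cum κ e j := by
  unfold cum
  apply Finset.sum_lt_sum_of_subset (i := j)
  · intro l hl
    simp only [mem_filter, mem_univ, true_and] at hl ⊢
    omega
  · simp
  · simpa using h
  · exact he
  · intros; omega

theorem cum_le_sum {κ e : Fin n → ℕ} (i : Fin n) : cum κ e i ≤ ∑ j, e j := by
  unfold cum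
  exact Finset.sum_le_sum_of_subset (Finset.filter_subset _ _)

theorem cum_max {κ e : Fin n → ℕ} {M : Fin n} (hM : ∀ j, κ j ≤ κ M) : cum κ e M = ∑ j, e j := by
  unfold cum
  rw [Finset.filter_true_of_mem (fun j _ => hM j)]

theorem cum_congr {κ κ' e : Fin n → ℕ} {i : Fin n} (h : ∀ i j, κ i ≤ κ j ↔ κ' i ≤ κ' j) :
    cum κ e i = cum κ' e i := by
  unfold cum
  rw [Finset.filter_congr (fun j _ => h j i)]

theorem key_ind {κ : Fin n → ℕ} (P : Fin n → Prop)
    (h0 : ∀ i, (∀ j, ¬ κ j < κ i) → P i)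
    (h1 : ∀ i j0, κ j0 < κ i → (∀ j, κ j < κ i → κ j ≤ κ j0) → P j0 → P i) (i : Fin n) : P i := by
  suffices H : ∀ m i, κ i = m → P i from H _ i rfl
  intro m
  induction m using Nat.strong_induction_on with
  | _ m ih =>
    intro i hi
    rcases pred_cases κ i with h | ⟨j0, hj, h⟩
    · exact h0 i h
    · exact h1 i j0 hj h (ih (κ j0) (by omega) j0 rfl)

theorem tele {κ f : Fin n → ℕ} (hk : Function.Injective κ) (hf : ∀ i j, κ i ≤ κ j → f i ≤ f j)
    (i : Fin n) : cum κ (fun j => f j - prv κ f j) i = f i := by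
  induction i using key_ind (κ := κ) with
  | h0 i h => rw [cum_zero hk h, prv_zero h]; rfl
  | h1 i j0 h0 h ih =>
    rw [cum_succ hk h0 h, ih, prv_eq hf h0 h]
    have := hf j0 i h0.le
    omega

/-- label order `1 < ... < n < -n < ... < -1` -/
def lab (s : Fin n → ℤ) (i : Fin n) : ℕ := if 0 < s i then i else 2 * n - i

def pos (s : Fin n → ℤ) (i : Fin n) : ℕ := (s i).natAbs

def key (s : Fin n → ℤ) (i : Fin n) : ℕ := pos s i * (2 * n + 1) + lab s i

def sgn (s : Fin n → ℤ) (p : Fin n → ℕ) (i : Fin n) : ℤ := if 0 < s i then (p i : ℤ) else -(p i : ℤ)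

theorem pos_sgn (s : Fin n → ℤ) (p : Fin n → ℕ) : pos (sgn s p) = p := by
  funext i
  unfold pos sgn
  split_ifs <;> simp

theorem sgn_pos_self (s s' : Fin n → ℤ) (h : ∀ i, 0 < s i ↔ 0 < s' i) : sgn s (pos s') = s' := by
  funext i
  unfold sgn
  simp only [pos]
  have := h i
  split_ifs <;> omega

theorem lab_congr {s s' : Fin n → ℤ} (h : ∀ i, 0 < s i ↔ 0 < s' i) : lab s = lab s' := by
  funext i
  unfold lab
  simp only [h]

theorem lab_lt (s : Fin n → ℤ) (i : Fin n) : lab s i < 2 * n + 1 := by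
  unfold lab
  split_ifs <;> omega

theorem lab_inj (s : Fin n → ℤ) : Function.Injective (lab s) := by
  intro i j h
  unfold lab at h
  apply Fin.ext
  split_ifs at h <;> omega

theorem lab_neg {s : Fin n → ℤ} {i j : Fin n} (h : lab s i < lab s j) (hi : ¬ 0 < s i) :
    ¬ 0 < s j := by
  unfold lab at h
  intro hj
  rw [if_neg hi, if_pos hj] at h
  omega

theorem key_lt_iff (s : Fin n → ℤ) (i j : Fin n) :
    key s i < key s j ↔ pos s i < pos s j ∨ (pos s i = pos s j ∧ lab s i < lab s j) := by
  unfold key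
  have h1 := lab_lt s i
  have h2 := lab_lt s j
  rcases lt_trichotomy (pos s i) (pos s j) with h | h | h
  · have : (pos s i + 1) * (2 * n + 1) ≤ pos s j * (2 * n + 1) := Nat.mul_le_mul_right _ h
    constructor
    · intro _; left; exact h
    · intro _; nlinarith
  · rw [h]; omega
  · have : (pos s j + 1) * (2 * n + 1) ≤ pos s i * (2 * n + 1) := Nat.mul_le_mul_right _ h
    constructor
    · intro _; nlinarith
    · intro _; omega

theorem key_inj (s : Fin n → ℤ) : Function.Injective (key s) := by
  intro i j h
  have h1 := key_lt_iff s i j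
  have h2 := key_lt_iff s j i
  apply lab_inj s
  omega

theorem pos_mono_key (s : Fin n → ℤ) (i j : Fin n) (h : key s i ≤ key s j) : pos s i ≤ pos s j := by
  have h2 := key_lt_iff s j i
  omega

/-- validity of a signed configuration -/
def Valid (a q : ℕ) (s : Fin n → ℤ) : Prop :=
  (∀ i, 0 < pos s i ∧ (0 < s i → a < pos s i) ∧ (¬ 0 < s i → 2 * pos s i + a < q) ∧
      2 * pos s i < q) ∧
  ∀ i j, i ≠ j → pos s i ≠ pos s j ∧
    (pos s i < pos s j → pos s j ≤ pos s i + a → lab s i < lab s j)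

def InRange (k : ℕ) (s : Fin n → ℤ) : Prop := ∀ i, 2 * pos s i ≤ k ∧ (¬ 0 < s i → 2 * pos s i < k)

def upP (a : ℕ) (r : Fin n → ℕ) (s : Fin n → ℤ) (i : Fin n) : ℕ :=
  a * pos s i + cum (key s) (fun j => 1 + r j) i

def up (a : ℕ) (r : Fin n → ℕ) (s : Fin n → ℤ) : Fin n → ℤ := sgn s (upP a r s)

def gap (s : Fin n → ℤ) (i : Fin n) : ℕ := pos s i - prv (pos s) (pos s) i

def quo (a : ℕ) (s : Fin n → ℤ) (i : Fin n) : ℕ := (gap s i - 1) / a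

def dig (a : ℕ) (s : Fin n → ℤ) (i : Fin n) : ℕ := (gap s i - 1) % a

def dlast (a q : ℕ) (s : Fin n → ℤ) : ℕ := (q - 2 * univ.sup (pos s) - 1) % a

def dnP (a : ℕ) (s : Fin n → ℤ) (i : Fin n) : ℕ := cum (pos s) (quo a s) i

def dn (a : ℕ) (s : Fin n → ℤ) : Fin n → ℤ := sgn s (dnP a s)

section up
variable {a q k : ℕ} {r : Fin n → ℕ} {rl : ℕ} {s : Fin n → ℤ}

theorem upP_lt_iff (i j : Fin n) : upP a r s i < upP a r s j ↔ key s i < key s j := by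
  have H : ∀ i j, key s i < key s j → upP a r s i < upP a r s j := by
    intro i j h
    unfold upP
    have h1 := Nat.mul_le_mul_left a (pos_mono_key s i j h.le)
    have h2 := cum_lt (e := fun j => 1 + r j) h (by omega)
    omega
  constructor
  · intro h
    by_contra hc
    rcases (not_lt.mp hc).lt_or_eq with h1 | h1
    · have := H _ _ h1; omega
    · rw [key_inj s h1] at h; omega
  · exact H i j

theorem pos_up : pos (up a r s) = upP a r s := pos_sgn _ _

theorem upP_pos (i : Fin n) : 0 < upP a r s i := by
  unfold upP cum
  beta_reduce
  have : 1 + r i ≤ ∑ j ∈ univ.filter (fun j => key s j ≤ key s i), (1 + r j) :=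
    Finset.single_le_sum (f := fun j => 1 + r j) (fun _ _ => Nat.zero_le _) (by simp)
  omega

theorem up_pos_iff (_ha : 0 < a) (i : Fin n) : 0 < s i ↔ 0 < up a r s i := by
  unfold up sgn
  have := upP_pos (a := a) (r := r) (s := s) i
  split_ifs <;> omega

theorem up_valid (ha : 0 < a) (hs : InRange k s)
    (hq : 2 * n + 1 + 2 * (∑ i, r i) + rl + a * k = q) : Valid a q (up a r s) := by
  have hsg := up_pos_iff (s := s) (r := r) ha
  have hlab := lab_congr hsg
  have hb : ∀ i, upP a r s i ≤ a * pos s i + n + ∑ i, r i := by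
    intro i
    have := cum_le_sum (κ := key s) (e := fun j => 1 + r j) i
    simp only [sum_add_distrib, sum_const, card_univ, Fintype.card_fin, smul_eq_mul, mul_one] at this
    unfold upP
    omega
  refine ⟨fun i => ?_, fun i j hij => ?_⟩
  · rw [← hsg, pos_up]
    have h1 := upP_pos (a := a) (r := r) (s := s) i
    obtain ⟨h2, h3⟩ := hs i
    have h4 := hb i
    have h5 : 2 * (a * pos s i) ≤ a * k := by nlinarith
    refine ⟨h1, fun h => ?_, fun h => ?_, by omega⟩
    · have : 1 ≤ pos s i := by unfold pos; omega
      have h6 : a * 1 ≤ a * pos s i := Nat.mul_le_mul_left a this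
      unfold upP cum
      beta_reduce
      have : 1 + r i ≤ ∑ j ∈ univ.filter (fun j => key s j ≤ key s i), (1 + r j) :=
        Finset.single_le_sum (f := fun j => 1 + r j) (fun _ _ => Nat.zero_le _) (by simp)
      omega
    · have := h3 h
      have h6 : 2 * (a * pos s i) + a ≤ a * k := by nlinarith
      omega
  · rw [pos_up, ← hlab]
    constructor
    · intro h
      have h1 := upP_lt_iff (a := a) (r := r) (s := s) i j
      have h2 := upP_lt_iff (a := a) (r := r) (s := s) j i
      exact hij (key_inj s (by omega))
    · intro h1 h2
      have h3 := (upP_lt_iff i j).1 h1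
      rcases (key_lt_iff s i j).1 h3 with h4 | h4
      · exfalso
        have h5 := cum_lt (e := fun j => 1 + r j) h3 (by omega)
        have h6 : a * (pos s i + 1) ≤ a * pos s j := Nat.mul_le_mul_left a h4
        unfold upP at h2
        rw [mul_add] at h6
        omega
      · exact h4.2

theorem gap_up (i : Fin n) :
    gap (up a r s) i = 1 + r i + a * (pos s i - prv (key s) (pos s) i) := by
  unfold gap
  rw [pos_up]
  have hm : ∀ i j, upP a r s i ≤ upP a r s j → upP a r s i ≤ upP a r s j := fun _ _ h => h
  rcases pred_cases (key s) i with h | ⟨j0, h0, h⟩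
  · rw [prv_zero h, prv_zero (fun j => by rw [upP_lt_iff]; exact h j)]
    unfold upP
    rw [cum_zero (key_inj s) h]
    simp only [Nat.sub_zero]
    omega
  · have hle : ∀ j, upP a r s j < upP a r s i → upP a r s j ≤ upP a r s j0 := by
      intro j hj
      have h1 := h j ((upP_lt_iff j i).1 hj)
      have h2 := upP_lt_iff (a := a) (r := r) (s := s) j0 j
      omega
    rw [prv_eq (pos_mono_key s) h0 h, prv_eq hm ((upP_lt_iff j0 i).2 h0) hle]
    unfold upP
    rw [cum_succ (key_inj s) h0 h]
    have h1 := pos_mono_key s j0 i h0.le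
    have h2 := Nat.mul_le_mul_left a h1
    rw [Nat.mul_sub]
    omega

theorem dig_up (hr : ∀ i, r i < a) : dig a (up a r s) = r := by
  funext i
  unfold dig
  rw [gap_up]
  have : 1 + r i + a * (pos s i - prv (key s) (pos s) i) - 1
    = r i + a * (pos s i - prv (key s) (pos s) i) := by omega
  rw [this, Nat.add_mul_mod_self_left, Nat.mod_eq_of_lt (hr i)]

theorem quo_up (hr : ∀ i, r i < a) :
    quo a (up a r s) = fun i => pos s i - prv (key s) (pos s) i := by
  funext i
  unfold quo
  rw [gap_up]
  have : 1 + r i + a * (pos s i - prv (key s) (pos s) i) - 1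
    = r i + a * (pos s i - prv (key s) (pos s) i) := by omega
  have ha : 0 < a := by have := hr i; omega
  rw [this, Nat.add_mul_div_left _ _ ha, Nat.div_eq_of_lt (hr i), zero_add]

theorem dn_up (ha : 0 < a) (hr : ∀ i, r i < a) : dn a (up a r s) = s := by
  unfold dn
  have : dnP a (up a r s) = pos s := by
    funext i
    unfold dnP
    rw [quo_up hr, pos_up]
    rw [cum_congr (κ' := key s), tele (key_inj s) (pos_mono_key s)]
    intro i j
    have h2 := upP_lt_iff (a := a) (r := r) (s := s) j i
    omega
  rw [this]
  apply sgn_pos_self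
  intro i
  exact (up_pos_iff ha i).symm

theorem exists_max (hn : 0 < n) (p : Fin n → ℕ) : ∃ M, (∀ j, p j ≤ p M) ∧ univ.sup p = p M := by
  have : Nonempty (Fin n) := ⟨⟨0, hn⟩⟩
  obtain ⟨M, _, hM⟩ := Finset.exists_max_image univ p univ_nonempty
  refine ⟨M, fun j => hM j (mem_univ _), le_antisymm (Finset.sup_le hM) (Finset.le_sup (mem_univ M))⟩

theorem dlast_up (hn : 0 < n) (hs : InRange k s) (hrl : rl < a)
    (hq : 2 * n + 1 + 2 * (∑ i, r i) + rl + a * k = q) : dlast a q (up a r s) = rl := by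
  unfold dlast
  rw [pos_up]
  obtain ⟨M, hM, hMs⟩ := exists_max hn (upP a r s)
  rw [hMs]
  have h1 : upP a r s M = a * pos s M + (n + ∑ i, r i) := by
    unfold upP
    rw [cum_max]
    · simp [sum_add_distrib]
    · intro j
      have h2 := upP_lt_iff (a := a) (r := r) (s := s) M j
      have := hM j
      omega
  have h2 : 2 * (a * pos s M) ≤ a * k := by nlinarith [(hs M).1]
  have h3 : q - 2 * upP a r s M - 1 = rl + a * (k - 2 * pos s M) := by
    rw [h1, Nat.mul_sub]
    have : a * (2 * pos s M) = 2 * (a * pos s M) := by ring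
    omega
  rw [h3, Nat.add_mul_mod_self_left, Nat.mod_eq_of_lt hrl]

end up

section dn
variable {a q : ℕ} {s : Fin n → ℤ}

theorem valid_inj (h : Valid a q s) : Function.Injective (pos s) := by
  intro i j hij
  by_contra hc
  exact (h.2 i j hc).1 hij

theorem gap_pos (h : Valid a q s) (i : Fin n) : 0 < gap s i := by
  unfold gap
  rcases pred_cases (pos s) i with h1 | ⟨j0, h0, h1⟩
  · rw [prv_zero h1]; exact (h.1 i).1
  · rw [prv_eq (fun _ _ h => h) h0 h1]; omega

theorem gap_eq (h : Valid a q s) (i : Fin n) : gap s i = 1 + dig a s i + a * quo a s i := by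
  have h1 := gap_pos h i
  unfold dig quo
  have := Nat.mod_add_div (gap s i - 1) a
  omega

theorem pos_eq (h : Valid a q s) (i : Fin n) :
    pos s i = a * dnP a s i + cum (pos s) (fun j => 1 + dig a s j) i := by
  have h1 := tele (κ := pos s) (f := pos s) (valid_inj h) (fun _ _ h => h) i
  have h2 : (fun j => pos s j - prv (pos s) (pos s) j)
      = fun j => 1 + dig a s j + a * quo a s j := by
    funext j
    exact gap_eq h j
  rw [h2] at h1
  refine h1.symm.trans ?_
  unfold dnP cum
  rw [sum_add_distrib, mul_sum, add_comm]

theorem quo_zero (h : Valid a q s) (ha : 0 < a) {i : Fin n} (hq : quo a s i = 0) : gap s i ≤ a := by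
  have h1 := gap_eq h i
  have : dig a s i < a := Nat.mod_lt _ ha
  rw [hq] at h1
  omega

theorem chain (h : Valid a q s) (ha : 0 < a) (i j : Fin n) :
    pos s i < pos s j → dnP a s i = dnP a s j → lab s i < lab s j := by
  induction j using key_ind (κ := pos s) with
  | h0 j hj => intro h1; exact absurd h1 (hj i)
  | h1 j j0 h0 hj ih =>
    intro h1 h2
    have h3 : dnP a s j = dnP a s j0 + quo a s j := cum_succ (valid_inj h) h0 hj
    have h4 : dnP a s i ≤ dnP a s j0 := cum_mono (hj i h1)
    have h5 : quo a s j = 0 := by omega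
    have h6 := quo_zero h ha h5
    unfold gap at h6
    rw [prv_eq (fun _ _ h => h) h0 hj] at h6
    have h7 : lab s j0 < lab s j := (h.2 j0 j (by rintro rfl; omega)).2 h0 (by omega)
    rcases (hj i h1).lt_or_eq with h8 | h8
    · have := ih h8 (by omega); omega
    · rw [valid_inj h h8]; exact h7

theorem dn_zero (h : Valid a q s) (ha : 0 < a) (i : Fin n) : dnP a s i = 0 → ¬ 0 < s i := by
  induction i using key_ind (κ := pos s) with
  | h0 i hi =>
    intro h1 h2
    unfold dnP at h1
    rw [cum_zero (valid_inj h) hi] at h1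
    have h3 := quo_zero h ha h1
    unfold gap at h3
    rw [prv_zero hi] at h3
    have := (h.1 i).2.1 h2
    omega
  | h1 i j0 h0 hi ih =>
    intro h1
    have h3 : dnP a s i = dnP a s j0 + quo a s i := cum_succ (valid_inj h) h0 hi
    exact lab_neg (chain h ha j0 i h0 (by omega)) (ih (by omega))

theorem dn_pos_iff (h : Valid a q s) (ha : 0 < a) (i : Fin n) : 0 < s i ↔ 0 < dn a s i := by
  unfold dn sgn
  have := dn_zero h ha i
  split_ifs <;> omega

theorem pos_dn : pos (dn a s) = dnP a s := pos_sgn _ _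

theorem key_dn (h : Valid a q s) (ha : 0 < a) (i j : Fin n) :
    key (dn a s) i ≤ key (dn a s) j ↔ pos s i ≤ pos s j := by
  have hl := lab_congr (dn_pos_iff h ha)
  have H : ∀ i j, pos s i < pos s j → key (dn a s) i < key (dn a s) j := by
    intro i j hij
    rw [key_lt_iff, pos_dn, ← hl]
    have h1 : dnP a s i ≤ dnP a s j := cum_mono hij.le
    have h2 := chain h ha i j hij
    omega
  constructor
  · intro h1
    have := H j i
    omega
  · intro h1
    rcases h1.lt_or_eq with h2 | h2
    · exact (H i j h2).le
    · rw [valid_inj h h2]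

theorem up_dn (h : Valid a q s) (ha : 0 < a) : up a (dig a s) (dn a s) = s := by
  unfold up
  have : upP a (dig a s) (dn a s) = pos s := by
    funext i
    rw [pos_eq h]
    unfold upP
    rw [pos_dn, cum_congr (key_dn h ha)]
  rw [this]
  apply sgn_pos_self
  intro i
  rw [← dn_pos_iff h ha]

theorem dn_range (h : Valid a q s) (ha : 0 < a) (hn : 0 < n) :
    ∃ k, 2 * n + 1 + 2 * (∑ i, dig a s i) + dlast a q s + a * k = q ∧ InRange k (dn a s) := by
  obtain ⟨M, hM, hMs⟩ := exists_max hn (pos s)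
  have hq := (h.1 M).2.2.2
  have h1 := pos_eq h M
  rw [cum_max hM] at h1
  simp only [sum_add_distrib, sum_const, card_univ, Fintype.card_fin, smul_eq_mul, mul_one] at h1
  obtain ⟨el, hel⟩ : ∃ el, el = (q - 2 * pos s M - 1) / a := ⟨_, rfl⟩
  have h2 : dlast a q s + a * el = q - 2 * pos s M - 1 := by
    unfold dlast
    rw [hMs, hel]
    exact Nat.mod_add_div _ _
  have h2l : dlast a q s < a := Nat.mod_lt _ ha
  clear hel
  refine ⟨2 * dnP a s M + el, ?_, fun i => ?_⟩
  · rw [mul_add]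
    have : a * (2 * dnP a s M) = 2 * (a * dnP a s M) := by ring
    omega
  · rw [pos_dn, ← dn_pos_iff h ha]
    have h3 : dnP a s i ≤ dnP a s M := cum_mono (hM i)
    refine ⟨by omega, fun hi => ?_⟩
    by_contra hc
    have h4 : el = 0 := by omega
    have h5 : dnP a s i = dnP a s M := by omega
    rw [h4] at h2
    have h6 : 0 < s M := by
      by_contra h7
      have := (h.1 M).2.2.1 h7
      omega
    rcases (hM i).lt_or_eq with h8 | h8
    · exact lab_neg (chain h ha i M h8 h5) hi h6
    · rw [valid_inj h h8] at hi; exact hi h6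

end dn
end Bij
section Count
open Finset

noncomputable def rangeSet (n k : ℕ) : Finset (Fin n → ℤ) :=
  Fintype.piFinset fun _ => Finset.Ioc ((-(k : ℤ)) / 2) ((k : ℤ) / 2)

theorem mem_rangeSet {n k : ℕ} {s : Fin n → ℤ} : s ∈ rangeSet n k ↔ InRange k s := by
  unfold rangeSet InRange
  simp only [Fintype.mem_piFinset, Finset.mem_Ioc, pos]
  refine forall_congr' fun i => ?_
  omega

theorem card_rangeSet (n k : ℕ) : (rangeSet n k).card = k ^ n := by
  unfold rangeSet
  rw [Fintype.card_piFinset]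
  simp only [Int.card_Ioc, prod_const, card_univ, Fintype.card_fin]
  congr 1
  omega

open Classical in
noncomputable def validSet (n a q : ℕ) : Finset (Fin n → ℤ) := (rangeSet n q).filter (Valid a q)

open Classical in
theorem mem_validSet {n a q : ℕ} {s : Fin n → ℤ} : s ∈ validSet n a q ↔ Valid a q s := by
  unfold validSet
  rw [mem_filter, mem_rangeSet]
  constructor
  · exact fun h => h.2
  · intro h
    refine ⟨fun i => ?_, h⟩
    have := (h.1 i).2.2.2
    omega

/-- the digit dbox -/
def dbox (n a : ℕ) : Finset ((Fin n → ℕ) × ℕ) :=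
  (Fintype.piFinset fun _ => range a) ×ˢ range a

def wt {n : ℕ} (ρ : (Fin n → ℕ) × ℕ) : ℕ := 2 * n + 1 + 2 * (∑ i, ρ.1 i) + ρ.2

theorem mem_box {n a : ℕ} {ρ : (Fin n → ℕ) × ℕ} :
    ρ ∈ dbox n a ↔ (∀ i, ρ.1 i < a) ∧ ρ.2 < a := by
  unfold dbox
  simp [Fintype.mem_piFinset]

open Classical in
theorem card_validSet {n a q : ℕ} (hn : 0 < n) (ha : 0 < a) :
    (validSet n a q).card =
      ∑ ρ ∈ dbox n a, if wt ρ ≤ q ∧ a ∣ q - wt ρ then ((q - wt ρ) / a) ^ n else 0 := by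
  rw [Finset.card_eq_sum_card_fiberwise (t := dbox n a) (f := fun s => (dig a s, dlast a q s))]
  · apply Finset.sum_congr rfl
    intro ρ hρ
    rw [mem_box] at hρ
    split_ifs with h
    · obtain ⟨h1, k, hk⟩ := h
      have hq : 2 * n + 1 + 2 * (∑ i, ρ.1 i) + ρ.2 + a * k = q := by
        unfold wt at h1 hk
        omega
      rw [hk, Nat.mul_div_cancel_left _ ha, ← card_rangeSet]
      apply Finset.card_nbij' (dn a) (up a ρ.1)
      · intro s hs
        simp only [coe_filter, Set.mem_ofPred_eq, mem_validSet] at hs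
        obtain ⟨hs, rfl⟩ := hs
        simp only [mem_coe, mem_rangeSet]
        obtain ⟨k', hk', hr⟩ := dn_range hs ha hn
        have : a * k' = a * k := by simp only at hq; omega
        rw [Nat.eq_of_mul_eq_mul_left ha this] at hr
        exact hr
      · intro s hs
        simp only [mem_coe, mem_rangeSet] at hs
        simp only [coe_filter, Set.mem_ofPred_eq, mem_validSet]
        refine ⟨up_valid ha hs hq, ?_⟩
        rw [dig_up hρ.1, dlast_up hn hs hρ.2 hq]
      · intro s hs
        simp only [coe_filter, Set.mem_ofPred_eq, mem_validSet] at hs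
        obtain ⟨hs, rfl⟩ := hs
        exact up_dn hs ha
      · intro s hs
        exact dn_up ha hρ.1
    · rw [Finset.card_eq_zero, Finset.filter_eq_empty_iff]
      rintro s hs rfl
      rw [mem_validSet] at hs
      obtain ⟨k', hk', hr⟩ := dn_range hs ha hn
      apply h
      have : wt (dig a s, dlast a q s) + a * k' = q := hk'
      exact ⟨by omega, k', by omega⟩
  · intro s hs
    simp only [mem_coe, mem_box]
    exact ⟨fun i => Nat.mod_lt _ ha, Nat.mod_lt _ ha⟩

theorem avoids_iff {q a : ℕ} {m : ℤ} (h1 : -(q : ℤ) < m) (h2 : m < q) :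
    Avoids (m : ZMod q) 0 (a : ℤ) ↔ ¬ (0 ≤ m ∧ m ≤ a) ∧ ¬ (m < 0 ∧ m + q ≤ a) := by
  unfold Avoids
  constructor
  · intro h
    refine ⟨fun ⟨h3, h4⟩ => h m h3 h4 rfl, fun ⟨h3, h4⟩ => h (m + q) (by omega) h4 ?_⟩
    push_cast
    simp
  · rintro ⟨h3, h4⟩ k hk0 hka he
    have hd : (q : ℤ) ∣ k - m := (ZMod.intCast_eq_intCast_iff_dvd_sub _ _ _).1 he
    obtain ⟨t, ht⟩ := hd
    have hq : (0 : ℤ) < q := by omega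
    rcases lt_trichotomy t 0 with h | h | h
    · nlinarith
    · subst h; omega
    · have : (q : ℤ) * 1 ≤ q * t := by
        apply mul_le_mul_of_nonneg_left _ hq.le
        omega
      omega

theorem N_BC_eq {n a q : ℕ} (hq : Odd q) (haq : a < q) :
    N_BC n q 0 (a : ℤ) = (validSet n a q).card := by
  have hq0 : 0 < q := hq.pos
  have : NeZero q := ⟨hq0.ne'⟩
  have key : ∀ s : Fin n → ℤ, InRange q s →
      (((∀ i, Avoids ((s i : ℤ) : ZMod q) 0 (a : ℤ) ∧ Avoids (2 * ((s i : ℤ) : ZMod q)) 0 (a : ℤ)) ∧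
    ∀ i j : Fin n, i < j → Avoids (((s i : ℤ) : ZMod q) - ((s j : ℤ) : ZMod q)) 0 (a : ℤ) ∧
      Avoids (((s i : ℤ) : ZMod q) + ((s j : ℤ) : ZMod q)) 0 (a : ℤ)) ↔ Valid a q s) := by
    intro s hs
    have hb : ∀ i, 2 * pos s i < q := by
      intro i
      have := (hs i).1
      obtain ⟨t, ht⟩ := hq
      omega
    have e1 : ∀ i, Avoids ((s i : ℤ) : ZMod q) 0 (a : ℤ) ↔ _ := fun i =>
      avoids_iff (m := s i) (by have := hb i; unfold pos at this; omega)
        (by have := hb i; unfold pos at this; omega)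
    have e2 : ∀ i, Avoids (2 * ((s i : ℤ) : ZMod q)) 0 (a : ℤ) ↔ _ := fun i => by
      have := avoids_iff (q := q) (a := a) (m := 2 * s i)
        (by have := hb i; unfold pos at this; omega)
        (by have := hb i; unfold pos at this; omega)
      push_cast at this
      exact this
    have e3 : ∀ i j, Avoids (((s i : ℤ) : ZMod q) - ((s j : ℤ) : ZMod q)) 0 (a : ℤ) ↔ _ :=
      fun i j => by
      have := avoids_iff (q := q) (a := a) (m := s i - s j)
        (by have := hb i; have := hb j; unfold pos at *; omega)
        (by have := hb i; have := hb j; unfold pos at *; omega)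
      push_cast at this
      exact this
    have e4 : ∀ i j, Avoids (((s i : ℤ) : ZMod q) + ((s j : ℤ) : ZMod q)) 0 (a : ℤ) ↔ _ :=
      fun i j => by
      have := avoids_iff (q := q) (a := a) (m := s i + s j)
        (by have := hb i; have := hb j; unfold pos at *; omega)
        (by have := hb i; have := hb j; unfold pos at *; omega)
      push_cast at this
      exact this
    simp only [e1, e2, e3, e4]
    unfold Valid
    constructor
    · rintro ⟨h1, h2⟩
      refine ⟨fun i => ?_, fun i j hij => ?_⟩
      · have := h1 i
        have := hb i
        unfold pos at *
        omega
      · have h1i := h1 i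
        have h1j := h1 j
        have hbi := hb i
        have hbj := hb j
        unfold pos lab at *
        rcases lt_or_gt_of_ne hij with h | h
        · have := h2 i j h
          have h' : (i : ℕ) < j := h
          split_ifs <;> omega
        · have := h2 j i h
          have h' : (j : ℕ) < i := h
          split_ifs <;> omega
    · rintro ⟨h1, h2⟩
      refine ⟨fun i => ?_, fun i j hij => ?_⟩
      · have := h1 i
        have := hb i
        unfold pos at *
        omega
      · have h1i := h1 i
        have h1j := h1 j
        have hbi := hb i
        have hbj := hb j
        have ha := h2 i j hij.ne
        have hb := h2 j i hij.ne'
        have h' : (i : ℕ) < j := hij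
        unfold pos lab at *
        split_ifs at ha hb <;> omega
  unfold N_BC
  rw [← Set.ncard_coe_finset, ← Set.InjOn.ncard_image (f := fun (s : Fin n → ℤ) i => ((s i : ℤ) : ZMod q))]
  · congr 1
    ext x
    simp only [Set.mem_image, mem_coe, mem_validSet, Set.mem_ofPred_eq]
    constructor
    · intro h
      have hx : x = fun i => (((x i).valMinAbs : ℤ) : ZMod q) := by
        funext i
        simp
      refine ⟨fun i => (x i).valMinAbs, ?_, hx.symm⟩
      rw [← key]
      · simpa using h
      · intro i
        have := (x i).valMinAbs_mem_Ioc
        simp only [Set.mem_Ioc] at this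
        simp only [pos]
        omega
    · rintro ⟨s, hs, rfl⟩
      refine (key s ?_).2 hs
      intro i
      have := (hs.1 i).2.2.2
      omega
  · intro s hs s' hs' h
    simp only [mem_coe, mem_validSet] at hs hs'
    funext i
    have h1 := congrFun h i
    simp only at h1
    have hd : (q : ℤ) ∣ s' i - s i := (ZMod.intCast_eq_intCast_iff_dvd_sub _ _ _).1 h1
    have h2 := (hs.1 i).2.2.2
    have h3 := (hs'.1 i).2.2.2
    unfold pos at h2 h3
    have := Int.eq_zero_of_abs_lt_dvd hd (by rw [abs_lt]; omega)
    omega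

end Count
section Equi
open Finset

noncomputable def TT (a : ℕ) (c : ZMod a) (f : ℚ[X]) : ℚ[X] →ₗ[ℚ] ℚ :=
  Polynomial.lsum fun j => (if (j : ZMod a) = c then f.eval (j : ℚ) else 0) • LinearMap.id

theorem TT_apply (a : ℕ) (c : ZMod a) (f P : ℚ[X]) :
    TT a c f P = ∑ j ∈ P.support, (if (j : ZMod a) = c then f.eval (j : ℚ) else 0) * P.coeff j := by
  simp only [TT, Polynomial.lsum_apply, Polynomial.sum_def, LinearMap.smul_apply, LinearMap.id_apply,
    smul_eq_mul]

theorem TT_monomial (a : ℕ) (c : ZMod a) (f : ℚ[X]) (j : ℕ) (t : ℚ) :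
    TT a c f (monomial j t) = (if (j : ZMod a) = c then f.eval (j : ℚ) else 0) * t := by
  simp only [TT, Polynomial.lsum_apply, LinearMap.smul_apply, LinearMap.id_apply, smul_eq_mul]
  rw [Polynomial.sum_monomial_index]
  simp

theorem TT_X_pow (a : ℕ) (c : ZMod a) (f : ℚ[X]) (j : ℕ) :
    TT a c f (X ^ j) = if (j : ZMod a) = c then f.eval (j : ℚ) else 0 := by
  rw [← monomial_one_right_eq_X_pow, TT_monomial, mul_one]

theorem TT_sub (a : ℕ) (c : ZMod a) (f g P : ℚ[X]) :
    TT a c (f - g) P = TT a c f P - TT a c g P := by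
  simp only [TT_apply, ← Finset.sum_sub_distrib]
  refine Finset.sum_congr rfl fun j _ => ?_
  split_ifs
  · rw [eval_sub]; ring
  · ring

theorem TT_shift (a : ℕ) (c : ZMod a) (f P : ℚ[X]) (m : ℕ) :
    TT a c f (X ^ m * P) = TT a (c - m) (taylor (m : ℚ) f) P := by
  induction P using Polynomial.induction_on' with
  | add p q hp hq => rw [mul_add, map_add, map_add, hp, hq]
  | monomial j t =>
    rw [X_pow_mul_monomial, TT_monomial, TT_monomial, taylor_eval]
    have : ((j + m : ℕ) : ZMod a) = c ↔ (j : ZMod a) = c - m := by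
      rw [eq_sub_iff_add_eq]; push_cast; rfl
    simp only [this]
    push_cast
    rfl

theorem TT_sum (a : ℕ) [NeZero a] (f P : ℚ[X]) :
    ∑ c : ZMod a, TT a c f P = P.sum fun j t => t * f.eval (j : ℚ) := by
  simp only [TT_apply, Polynomial.sum_def]
  rw [Finset.sum_comm]
  refine Finset.sum_congr rfl fun j _ => ?_
  rw [← Finset.sum_mul]
  simp [mul_comm]

theorem degree_taylor_sub (f : ℚ[X]) (t : ℚ) (m : ℕ) (hf : f.degree < (m + 1 : ℕ)) :
    (taylor t f - f).degree < (m : ℕ) := by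
  by_cases h : f = 0
  · subst h; simp
  · have h1 : (taylor t f - f).degree < (taylor t f).degree := by
      apply degree_sub_lt_left
      · exact degree_taylor _ _
      · simpa using h
      · exact leadingCoeff_taylor _ _
    rw [degree_taylor] at h1
    rw [degree_eq_natDegree h] at h1 hf
    refine lt_of_lt_of_le h1 ?_
    have : f.natDegree < m + 1 := by exact_mod_cast hf
    exact_mod_cast Nat.lt_succ_iff.mp this

theorem equi (a s : ℕ) (ha : 0 < a) (φ : ℚ[X]) (hφ : (1 - X ^ s) * φ = 1 - X ^ a) (m : ℕ) :
    ∀ f : ℚ[X], f.degree < (m : ℕ) → ∀ (Q : ℚ[X]) (c : ZMod a),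
      TT a c f (φ ^ m * Q) = TT a (c - s) f (φ ^ m * Q) := by
  induction m with
  | zero =>
    intro f hf Q c
    have : f = 0 := by
      rw [← degree_eq_bot]
      simpa using hf
    subst this
    simp [TT_apply]
  | succ m ih =>
    intro f hf Q c
    obtain ⟨P, hP⟩ : ∃ P, P = φ ^ (m + 1) * Q := ⟨_, rfl⟩
    obtain ⟨R, hR⟩ : ∃ R, R = φ ^ m * Q := ⟨_, rfl⟩
    have hPR : P - X ^ s * P = R - X ^ a * R := by
      rw [hP, hR]
      linear_combination (φ ^ m * Q) * hφ
    obtain ⟨D, hD⟩ : ∃ D : ZMod a → ℚ, ∀ c, D c = TT a (c - s) (taylor (s : ℚ) f - f) P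
      - TT a c (taylor (a : ℚ) f - f) R := ⟨_, fun _ => rfl⟩
    have hDP : ∀ c, TT a c f P - TT a (c - s) f P = D c := by
      intro c
      have h1 := congrArg (TT a c f) hPR
      rw [map_sub, map_sub, TT_shift, TT_shift, ZMod.natCast_self, sub_zero] at h1
      rw [hD, TT_sub, TT_sub]
      linarith
    have hDc : ∀ c, D c = D (c - s) := by
      intro c
      rw [hD, hD]
      have h1 := ih _ (degree_taylor_sub f s m hf) (φ * Q) (c - s)
      have h2 := ih _ (degree_taylor_sub f a m hf) Q c
      have h3 : φ ^ m * (φ * Q) = P := by rw [hP]; ring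
      rw [h3] at h1
      rw [← hR] at h2
      rw [h1, h2]
    have hDt : ∀ t : ℕ, D (c - t * s) = D c := by
      intro t
      induction t with
      | zero => simp
      | succ t iht =>
        rw [← iht, hDc (c - t * s)]
        congr 1
        push_cast; ring
    have hu : ∀ t : ℕ, TT a (c - t * s) f P = TT a c f P - t * D c := by
      intro t
      induction t with
      | zero => simp
      | succ t iht =>
        have h1 := hDP (c - t * s)
        rw [hDt, iht] at h1
        have h2 : c - ((t + 1 : ℕ) : ZMod a) * s = c - t * s - s := by push_cast; ring
        rw [h2]
        push_cast
        linarith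
    have h0 := hu a
    rw [ZMod.natCast_self, zero_mul, sub_zero] at h0
    have h1 : (a : ℚ) * D c = 0 := by linarith
    have h2 : D c = 0 := by
      rcases mul_eq_zero.1 h1 with h | h
      · exact absurd h (by exact_mod_cast ha.ne')
      · exact h
    have := hDP c
    rw [← hP]
    linarith

theorem polysum_eq (g : ℚ[X]) (q n : ℕ) :
    polysum g q n = g.sum fun j t => t * ((C (q : ℚ) - X) ^ n : ℚ[X]).eval (j : ℚ) := by
  unfold polysum
  rw [Polynomial.sum_over_range _ (by simp)]
  simp

theorem deg_f (q n : ℕ) : ((C (q : ℚ) - X) ^ n : ℚ[X]).degree < ((n + 1 : ℕ) : WithBot ℕ) := by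
  have h1 : (C (q : ℚ) - X : ℚ[X]).natDegree ≤ 1 := by
    apply (natDegree_sub_le _ _).trans
    simp
  have h2 := natDegree_pow_le_of_le n h1
  apply lt_of_le_of_lt degree_le_natDegree
  have : ((C (q : ℚ) - X) ^ n : ℚ[X]).natDegree < n + 1 := by omega
  exact_mod_cast this

theorem phi_mul (a : ℕ) : (1 - X) * phi a = 1 - X ^ a := by
  unfold phi
  exact mul_neg_geom_sum X a

theorem phi2_eq (a : ℕ) : phi2 a = ∑ i ∈ Finset.range a, (X ^ 2) ^ i := by
  unfold phi2
  simp only [pow_mul]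

theorem phi2_mul (a : ℕ) : (1 - X ^ 2) * phi2 a = 1 - X ^ (2 * a) := by
  rw [phi2_eq, mul_neg_geom_sum, pow_mul]

theorem one_sub_ne (m : ℕ) (hm : 0 < m) : (1 - X ^ m : ℚ[X]) ≠ 0 := by
  intro h
  have := congrArg (eval 0) h
  simp [hm.ne'] at this

end Equi
section Final
open Finset

theorem gen_eq (n a : ℕ) :
    (X ^ (2 * n + 1) * (phi2 a) ^ n * phi a : ℚ[X]) = ∑ ρ ∈ dbox n a, X ^ (wt ρ) := by
  have h1 : (phi2 a) ^ n = ∑ r ∈ Fintype.piFinset (fun _ : Fin n => range a),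
      (X : ℚ[X]) ^ (2 * ∑ i, r i) := by
    have := Finset.prod_univ_sum (fun _ : Fin n => range a) (fun _ j => (X : ℚ[X]) ^ (2 * j))
    rw [Finset.prod_const, card_univ, Fintype.card_fin] at this
    unfold phi2
    rw [this]
    refine Finset.sum_congr rfl fun r _ => ?_
    rw [Finset.prod_pow_eq_pow_sum, Finset.mul_sum]
  unfold dbox
  rw [Finset.sum_product, h1, phi, mul_assoc, Finset.sum_mul_sum, Finset.mul_sum]
  refine Finset.sum_congr rfl fun r _ => ?_
  rw [Finset.mul_sum]
  refine Finset.sum_congr rfl fun l _ => ?_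
  unfold wt
  rw [← pow_add, ← pow_add, add_assoc (2 * n + 1)]

theorem wt_le {n a : ℕ} {ρ : (Fin n → ℕ) × ℕ} (h : ρ ∈ dbox n a) :
    wt ρ ≤ 2 * n + 1 + 2 * (n * a) + a := by
  rw [mem_box] at h
  have : ∑ i, ρ.1 i ≤ ∑ _i : Fin n, a := Finset.sum_le_sum fun i _ => (h.1 i).le
  simp only [sum_const, card_univ, Fintype.card_fin, smul_eq_mul] at this
  unfold wt
  omega

theorem main_T {n a q : ℕ} (hn : 0 < n) (ha : 0 < a) (hq : Odd q)
    (hN : 2 * n + 1 + 2 * (n * a) + a < q) :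
    (a : ℚ) ^ n * (N_BC n q 0 (a : ℤ) : ℚ) =
      TT a (q : ZMod a) ((C (q : ℚ) - X) ^ n) (X ^ (2 * n + 1) * (phi2 a) ^ n * phi a) := by
  rw [N_BC_eq hq (by omega), card_validSet hn ha, gen_eq, map_sum, Nat.cast_sum, Finset.mul_sum]
  refine Finset.sum_congr rfl fun ρ hρ => ?_
  have h1 : wt ρ ≤ q := (wt_le hρ).trans hN.le
  rw [TT_X_pow]
  have h2 : ((wt ρ : ℕ) : ZMod a) = (q : ZMod a) ↔ wt ρ ≤ q ∧ a ∣ q - wt ρ := by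
    rw [ZMod.natCast_eq_natCast_iff, Nat.modEq_iff_dvd' h1]
    tauto
  simp only [h2]
  split_ifs with h
  · obtain ⟨k, hk⟩ := h.2
    rw [hk, Nat.mul_div_cancel_left _ ha]
    have h3 : (q : ℚ) - (wt ρ : ℚ) = a * k := by
      rw [← Nat.cast_sub h1, hk]; push_cast; rfl
    simp only [eval_pow, eval_sub, eval_C, eval_X, h3]
    push_cast
    ring
  · simp

theorem phi2_odd {a : ℕ} (ha : Odd a) : ∃ ψ : ℚ[X], phi2 a = phi a * ψ := by
  refine ⟨∑ i ∈ range a, (-X) ^ i, ?_⟩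
  apply mul_left_cancel₀ (one_sub_ne 2 (by norm_num))
  have h1 := phi_mul a
  have h2 := mul_neg_geom_sum (-X : ℚ[X]) a
  rw [ha.neg_pow] at h2
  rw [phi2_mul]
  have h3 : (1 - X ^ (2 * a) : ℚ[X]) = (1 - X ^ a) * (1 - - X ^ a) := by ring
  rw [h3, ← h1, ← h2]
  ring

theorem phi2_even (b : ℕ) : phi2 (2 * b) = phi2 b * (1 + X ^ (2 * b)) := by
  apply mul_left_cancel₀ (one_sub_ne 2 (by norm_num))
  rw [← mul_assoc, phi2_mul, phi2_mul]
  ring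

theorem phi_even (b : ℕ) : phi (2 * b) = (1 + X) * phi2 b := by
  apply mul_left_cancel₀ (one_sub_ne 1 (by norm_num))
  rw [pow_one, phi_mul, ← phi2_mul]
  ring

theorem phi2_expand (b : ℕ) : phi2 b = expand ℚ 2 (phi b) := by
  simp [phi, phi2, map_sum, pow_mul]

theorem TT_parity {a : ℕ} (ha : Even a) (n d : ℕ) (hd : Even d) (F G : ℚ[X]) :
    TT a (d : ZMod a) F (X ^ (2 * n + 1) * expand ℚ 2 G) = 0 := by
  induction G using Polynomial.induction_on' with
  | add p q hp hq => rw [map_add, mul_add, map_add, hp, hq, add_zero]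
  | monomial j t =>
    rw [expand_monomial, X_pow_mul_monomial, TT_monomial, if_neg, zero_mul]
    rw [ZMod.natCast_eq_natCast_iff]
    intro h
    have h2 : (j * 2 + (2 * n + 1)) ≡ d [MOD 2] := h.of_dvd ha.two_dvd
    obtain ⟨e, he⟩ := hd
    unfold Nat.ModEq at h2
    omega

theorem const_of_step {a : ℕ} [NeZero a] (u : ZMod a → ℚ) (h : ∀ c, u c = u (c - 1)) (c : ZMod a) :
    ∑ x, u x = a * u c := by
  have h1 : ∀ t : ℕ, u (t : ZMod a) = u 0 := by
    intro t
    induction t with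
    | zero => simp
    | succ t ih => rw [h, ← ih]; push_cast; simp
  have h2 : ∀ x, u x = u 0 := by
    intro x
    have := h1 x.val
    rwa [ZMod.natCast_zmod_val] at this
  rw [h2 c, Finset.sum_congr rfl (fun x _ => h2 x)]
  simp [ZMod.card]

end Final

/-- Proposition 4.1. Formula for the number of points avoiding the
`BC_n` deformation with hyperplanes `x_i, 2x_i, x_i ± x_j = 0, 1, ..., a`,
for all large odd `q`. -/
theorem statement5 (n a : ℕ) (hn : 2 ≤ n) (ha : 1 ≤ a) :
    ∃ N : ℕ, ∀ q : ℕ, Odd q → N < q →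
      (Even a →
        (a : ℚ) ^ (n + 1) * (N_BC n q 0 (a : ℤ) : ℚ) =
          2 * polysum (X ^ (2 * n + 1) * (phi2 a) ^ n * phi2 (a / 2)) q n) ∧
      (Odd a →
        (a : ℚ) ^ (n + 1) * (N_BC n q 0 (a : ℤ) : ℚ) =
          polysum (X ^ (2 * n + 1) * (phi2 a) ^ n * phi a) q n) := by
  refine ⟨2 * n + 1 + 2 * (n * a) + a, fun q hq hN => ?_⟩
  have hT := main_T (by omega : 0 < n) ha hq hN
  have : NeZero a := ⟨by omega⟩
  have hdeg := deg_f q n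
  rw [pow_succ, mul_comm ((a : ℚ) ^ n), mul_assoc, hT]
  rw [polysum_eq, polysum_eq, ← TT_sum a, ← TT_sum a]
  generalize (C (q : ℚ) - X) ^ n = f at hdeg
  constructor
  · intro hae
    obtain ⟨b, hb⟩ := hae.two_dvd
    have hb2 : a / 2 = b := by omega
    rw [hb2]
    obtain ⟨g, hg⟩ : ∃ g : ℚ[X], g = X ^ (2 * n + 1) * (phi2 a) ^ n * phi2 b := ⟨_, rfl⟩
    have hg1 : X ^ (2 * n + 1) * (phi2 a) ^ n * phi a = g + X ^ 1 * g := by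
      rw [hg]
      nth_rw 2 [hb]
      rw [phi_even]
      ring
    have hg2 : g = X ^ (2 * n + 1) * expand ℚ 2 (phi a ^ n * phi b) := by
      rw [hg, map_mul, map_pow, ← phi2_expand, ← phi2_expand, mul_assoc]
    have hg3 : g = phi2 b ^ (n + 1) * (X ^ (2 * n + 1) * (1 + X ^ (2 * b)) ^ n) := by
      rw [hg]
      nth_rw 1 [hb]
      rw [phi2_even, mul_pow]
      ring
    have hstep : ∀ c : ZMod a, TT a c f g = TT a (c - (2 : ℕ)) f g := by
      intro c
      rw [hg3]
      exact equi a 2 ha (phi2 b) (by rw [phi2_mul, hb]) (n + 1) f hdeg _ c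
    obtain ⟨m, hm⟩ := hq
    have hz1 : TT a (q : ZMod a) f (X ^ 1 * g) = 0 := by
      rw [TT_shift]
      have : (q : ZMod a) - (1 : ℕ) = ((2 * m : ℕ) : ZMod a) := by
        rw [hm]; push_cast; ring
      rw [this, hg2]
      exact TT_parity hae n _ (even_two_mul m) _ _
    have hz2 : TT a ((q : ZMod a) + 1) f g = 0 := by
      have : (q : ZMod a) + 1 = ((2 * (m + 1) : ℕ) : ZMod a) := by
        rw [hm]; push_cast; ring
      rw [this, hg2]
      exact TT_parity hae n _ (even_two_mul _) _ _
    rw [hg1, ← hg, map_add, hz1, add_zero]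
    have h1 := const_of_step (fun c => TT a c f g + TT a (c + 1) f g) (by
      intro c
      beta_reduce
      have h2 := hstep (c + 1)
      have h3 : c + 1 - ((2 : ℕ) : ZMod a) = c - 1 := by push_cast; ring
      rw [h3] at h2
      rw [h2, sub_add_cancel]
      ring) (q : ZMod a)
    beta_reduce at h1
    rw [Finset.sum_add_distrib, hz2, add_zero] at h1
    have h4 : ∑ c : ZMod a, TT a (c + 1) f g = ∑ c : ZMod a, TT a c f g :=
      Equiv.sum_comp (Equiv.addRight (1 : ZMod a)) (fun c => TT a c f g)
    rw [h4] at h1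
    linarith
  · intro hao
    obtain ⟨ψ, hψ⟩ := phi2_odd hao
    refine (const_of_step
      (fun c => TT a c f (X ^ (2 * n + 1) * (phi2 a) ^ n * phi a)) ?_ (q : ZMod a)).symm
    intro c
    beta_reduce
    have hg3 : X ^ (2 * n + 1) * (phi2 a) ^ n * phi a
        = phi a ^ (n + 1) * (X ^ (2 * n + 1) * ψ ^ n) := by
      rw [hψ]; ring
    rw [hg3]
    have := equi a 1 ha (phi a) (by rw [pow_one, phi_mul]) (n + 1) f hdeg
      (X ^ (2 * n + 1) * ψ ^ n) c
    rw [Nat.cast_one] at this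
    exact this
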